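/- In the Gaussian denoising model Z = X + ε with ε ~ N(0, σ²I), suppose the MMSE denoiser ψ_σ(z) = E[X|Z=z] equals prox_{φ}(z) for a proper lower-semicontinuous function φ, and prox_φ is single-valued and continuous. Then the negative log-marginal f_Z := −log p_Z satisfies σ²∇f_Z(x) = ∇M_1 φ(x) for all x, and hence f_Z = (1/σ²) M_1 φ + C for a constant C on ℝⁿ. -/

import Mathlib

open scoped RealInnerProductSpace
open Filter Topology MeasureTheory

noncomputable section

/-- Density of the centered Gaussian `N(0, σ²I)` on `ℝⁿ`. -/
def gaussPdf (n : ℕ) (σ : ℝ) (v : EuclideanSpace ℝ (Fin n)) : ℝ :=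
  (2 * Real.pi * σ ^ 2) ^ (-(n : ℝ) / 2) * Real.exp (-‖v‖ ^ 2 / (2 * σ ^ 2))

/-- Marginal density of `Z = X + ε` where `X ~ μ` and `ε ~ N(0, σ²I)`. -/
def pZ (n : ℕ) (σ : ℝ) (μ : Measure (EuclideanSpace ℝ (Fin n)))
    (z : EuclideanSpace ℝ (Fin n)) : ℝ :=
  ∫ x, gaussPdf n σ (z - x) ∂μ

/-- MMSE denoiser `ψ_σ(z) = E[X | Z = z]`. -/
def mmse (n : ℕ) (σ : ℝ) (μ : Measure (EuclideanSpace ℝ (Fin n)))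
    (z : EuclideanSpace ℝ (Fin n)) : EuclideanSpace ℝ (Fin n) :=
  (pZ n σ μ z)⁻¹ • ∫ x, gaussPdf n σ (z - x) • x ∂μ

/-- Lower Moreau envelope with parameter 1 (real-valued via `toReal`). -/
def moreauEnv1 {n : ℕ} (φ : EuclideanSpace ℝ (Fin n) → EReal)
    (x : EuclideanSpace ℝ (Fin n)) : ℝ :=
  (⨅ z, (φ z + ((‖z - x‖ ^ 2 / 2 : ℝ) : EReal))).toReal

lemma hasGrad_of_subgrad {n : ℕ} (F : EuclideanSpace ℝ (Fin n) → ℝ)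
    (p : EuclideanSpace ℝ (Fin n) → EuclideanSpace ℝ (Fin n)) (hp : Continuous p)
    (h : ∀ x y, inner ℝ (p x) (y - x) ≤ F y - F x) (x : EuclideanSpace ℝ (Fin n)) :
    HasGradientAt F (p x) x := by
  rw [hasGradientAt_iff_isLittleO, Asymptotics.isLittleO_iff]
  intro c hc
  have h1 : ∀ᶠ y in 𝓝 x, dist (p y) (p x) < c := (Metric.tendsto_nhds.1 hp.continuousAt) c hc
  filter_upwards [h1] with y hy
  have ha := h x y
  have hb := h y x
  have e : inner ℝ (p y) (x - y) = - inner ℝ (p y) (y - x) := by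
    rw [← inner_neg_right]; congr 1; abel
  have h2 : inner ℝ (p y - p x) (y - x) ≤ ‖p y - p x‖ * ‖y - x‖ := real_inner_le_norm _ _
  rw [inner_sub_left] at h2
  rw [dist_eq_norm] at hy
  have h3 : ‖p y - p x‖ * ‖y - x‖ ≤ c * ‖y - x‖ := by gcongr
  rw [Real.norm_eq_abs, abs_of_nonneg (by linarith)]
  linarith

lemma const_of_subgrad {n : ℕ} (F G : EuclideanSpace ℝ (Fin n) → ℝ)
    (p : EuclideanSpace ℝ (Fin n) → EuclideanSpace ℝ (Fin n)) (hp : Continuous p)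
    (hF : ∀ x y, inner ℝ (p x) (y - x) ≤ F y - F x)
    (hG : ∀ x y, inner ℝ (p x) (y - x) ≤ G y - G x) (x : EuclideanSpace ℝ (Fin n)) :
    F x - G x = F 0 - G 0 := by
  have hd : ∀ x, HasFDerivAt (fun x => F x - G x) (0 : EuclideanSpace ℝ (Fin n) →L[ℝ] ℝ) x := by
    intro x
    have := (hasGrad_of_subgrad F p hp hF x).hasFDerivAt.sub
      (hasGrad_of_subgrad G p hp hG x).hasFDerivAt
    rw [sub_self] at this
    exact this
  exact is_const_of_fderiv_eq_zero (𝕜 := ℝ) (fun x => (hd x).differentiableAt)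
    (fun x => (hd x).fderiv) x 0

lemma moreau_subgrad {n : ℕ} (φ : EuclideanSpace ℝ (Fin n) → EReal)
    (hproper : ∃ x, φ x ≠ ⊤) (hnbot : ∀ x, φ x ≠ ⊥)
    (p : EuclideanSpace ℝ (Fin n) → EuclideanSpace ℝ (Fin n))
    (hp_prox : ∀ x z,
      IsMinOn (fun w => φ w + ((‖w - x‖ ^ 2 / 2 : ℝ) : EReal)) Set.univ z ↔ z = p x)
    (x y : EuclideanSpace ℝ (Fin n)) :
    inner ℝ (p x) (y - x) ≤ (‖y‖ ^ 2 / 2 - moreauEnv1 φ y) - (‖x‖ ^ 2 / 2 - moreauEnv1 φ x) := by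
  have hmin : ∀ x w, φ (p x) + ((‖p x - x‖ ^ 2 / 2 : ℝ) : EReal)
      ≤ φ w + ((‖w - x‖ ^ 2 / 2 : ℝ) : EReal) := fun x w =>
    ((hp_prox x (p x)).2 rfl) (Set.mem_univ w)
  have hfin : ∀ x, φ (p x) ≠ ⊤ := by
    intro x hx
    obtain ⟨w, hw⟩ := hproper
    have := hmin x w
    rw [hx, EReal.top_add_coe, top_le_iff] at this
    exact (EReal.add_lt_top hw (EReal.coe_ne_top _)).ne this
  have hval : ∀ x, moreauEnv1 φ x = (φ (p x)).toReal + ‖p x - x‖ ^ 2 / 2 := by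
    intro x
    have : (⨅ z, (φ z + ((‖z - x‖ ^ 2 / 2 : ℝ) : EReal)))
        = φ (p x) + ((‖p x - x‖ ^ 2 / 2 : ℝ) : EReal) :=
      le_antisymm (iInf_le _ (p x)) (le_iInf (hmin x))
    rw [moreauEnv1, this, EReal.toReal_add (hfin x) (hnbot _) (EReal.coe_ne_top _)
      (EReal.coe_ne_bot _), EReal.toReal_coe]
  have key := hmin y (p x)
  rw [← EReal.coe_toReal (hfin x) (hnbot _), ← EReal.coe_toReal (hfin y) (hnbot _)] at key
  norm_cast at key
  rw [hval, hval]
  have e1 := @norm_sub_sq_real _ _ _ (p x) y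
  have e2 := @norm_sub_sq_real _ _ _ (p x) x
  rw [inner_sub_right]
  linarith

lemma gauss_pos {n : ℕ} (σ : ℝ) (hσ : 0 < σ) (v : EuclideanSpace ℝ (Fin n)) :
    0 < gaussPdf n σ v := by
  unfold gaussPdf
  have := Real.pi_pos
  positivity

lemma gauss_cont {n : ℕ} (σ : ℝ) : Continuous (gaussPdf n σ) := by
  unfold gaussPdf
  fun_prop

lemma gauss_bdd {n : ℕ} (σ : ℝ) (hσ : 0 < σ) (v : EuclideanSpace ℝ (Fin n)) :
    ‖gaussPdf n σ v‖ ≤ (2 * Real.pi * σ ^ 2) ^ (-(n : ℝ) / 2) := by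
  rw [Real.norm_of_nonneg (gauss_pos σ hσ v).le, gaussPdf]
  have := Real.pi_pos
  apply mul_le_of_le_one_right (by positivity)
  rw [Real.exp_le_one_iff, neg_div]
  have : 0 ≤ ‖v‖ ^ 2 / (2 * σ ^ 2) := by positivity
  linarith

lemma gauss_int {n : ℕ} (σ : ℝ) (hσ : 0 < σ)
    (μ : Measure (EuclideanSpace ℝ (Fin n))) [IsProbabilityMeasure μ]
    (z : EuclideanSpace ℝ (Fin n)) : Integrable (fun x => gaussPdf n σ (z - x)) μ :=
  Integrable.of_bound ((gauss_cont σ).comp (by fun_prop)).aestronglyMeasurable _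
    (Eventually.of_forall fun x => gauss_bdd σ hσ (z - x))

lemma gauss_smul_int {n : ℕ} (σ : ℝ) (hσ : 0 < σ)
    (μ : Measure (EuclideanSpace ℝ (Fin n))) [IsProbabilityMeasure μ]
    (hmom : Integrable (fun x => x) μ)
    (z : EuclideanSpace ℝ (Fin n)) : Integrable (fun x => gaussPdf n σ (z - x) • x) μ :=
  hmom.bdd_smul ((2 * Real.pi * σ ^ 2) ^ (-(n : ℝ) / 2))
    ((gauss_cont σ).comp (by fun_prop)).aestronglyMeasurable
    (Eventually.of_forall fun x => gauss_bdd σ hσ (z - x))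

lemma pZ_pos {n : ℕ} (σ : ℝ) (hσ : 0 < σ)
    (μ : Measure (EuclideanSpace ℝ (Fin n))) [IsProbabilityMeasure μ]
    (z : EuclideanSpace ℝ (Fin n)) : 0 < pZ n σ μ z := by
  unfold pZ
  rw [integral_pos_iff_support_of_nonneg (fun x => (gauss_pos σ hσ _).le) (gauss_int σ hσ μ z)]
  have : Function.support (fun x => gaussPdf n σ (z - x)) = Set.univ := by
    ext x; simp [(gauss_pos σ hσ (z - x)).ne']
  rw [this]; simp

lemma gauss_subgrad {n : ℕ} (σ : ℝ) (hσ : 0 < σ)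
    (μ : Measure (EuclideanSpace ℝ (Fin n))) [IsProbabilityMeasure μ]
    (hmom : Integrable (fun x => x) μ) (z y : EuclideanSpace ℝ (Fin n)) :
    inner ℝ (mmse n σ μ z) (y - z) ≤
      (σ ^ 2 * Real.log (pZ n σ μ y) + ‖y‖ ^ 2 / 2)
        - (σ ^ 2 * Real.log (pZ n σ μ z) + ‖z‖ ^ 2 / 2) := by
  set m := mmse n σ μ z with hm
  have hpz := pZ_pos σ hσ μ z
  have hpy := pZ_pos σ hσ μ y
  have hI : ∫ x, gaussPdf n σ (z - x) • x ∂μ = pZ n σ μ z • m := by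
    rw [hm, mmse, smul_smul, mul_inv_cancel₀ hpz.ne', one_smul]
  set a : ℝ := (‖z‖ ^ 2 - ‖y‖ ^ 2 + 2 * inner ℝ (y - z) m) / (2 * σ ^ 2) with ha
  have hpt : ∀ x, Real.exp a * (gaussPdf n σ (z - x)
      + (inner ℝ (y - z) (gaussPdf n σ (z - x) • x)
        - gaussPdf n σ (z - x) * inner ℝ (y - z) m) / σ ^ 2) ≤ gaussPdf n σ (y - x) := by
    intro x
    set t : ℝ := inner ℝ (y - z) (x - m) / σ ^ 2 with ht
    have e : gaussPdf n σ (y - x) = gaussPdf n σ (z - x) * (Real.exp a * Real.exp t) := by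
      unfold gaussPdf
      rw [← Real.exp_add, mul_assoc (_ ^ _), ← Real.exp_add]
      congr 2
      rw [ha, ht, norm_sub_sq_real, norm_sub_sq_real, inner_sub_right, inner_sub_left,
        inner_sub_left]
      field_simp
      ring
    have h1 := Real.add_one_le_exp t
    have hg := gauss_pos σ hσ (z - x)
    have : Real.exp a * (gaussPdf n σ (z - x)
      + (inner ℝ (y - z) (gaussPdf n σ (z - x) • x)
        - gaussPdf n σ (z - x) * inner ℝ (y - z) m) / σ ^ 2)
        = gaussPdf n σ (z - x) * (Real.exp a * (t + 1)) := by
      rw [ht, inner_smul_right, inner_sub_right]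
      ring
    rw [this, e]
    gcongr
  have i1 := gauss_int σ hσ μ z
  have i2 := gauss_smul_int σ hσ μ hmom z
  have i3 : Integrable (fun x => inner ℝ (y - z) (gaussPdf n σ (z - x) • x)) μ :=
    i2.const_inner _
  have i4 := i1.mul_const (inner ℝ (y - z) m)
  have i5 : Integrable (fun x => (inner ℝ (y - z) (gaussPdf n σ (z - x) • x)
        - gaussPdf n σ (z - x) * inner ℝ (y - z) m) / σ ^ 2) μ := (i3.sub i4).div_const (σ ^ 2)
  have hle := integral_mono ((i1.add i5).const_mul (Real.exp a)) (gauss_int σ hσ μ y) hpt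
  have hL : ∫ x, Real.exp a * (gaussPdf n σ (z - x)
      + (inner ℝ (y - z) (gaussPdf n σ (z - x) • x)
        - gaussPdf n σ (z - x) * inner ℝ (y - z) m) / σ ^ 2) ∂μ = Real.exp a * pZ n σ μ z := by
    have s1 : ∫ x, (inner ℝ (y - z) (gaussPdf n σ (z - x) • x)
        - gaussPdf n σ (z - x) * inner ℝ (y - z) m) / σ ^ 2 ∂μ = 0 := by
      rw [integral_div, integral_sub i3 i4, integral_inner i2, hI, integral_mul_const,
        inner_smul_right, pZ]
      simp
    rw [integral_const_mul, integral_add i1 i5, s1, add_zero, pZ]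
  have hle' : Real.exp a * pZ n σ μ z ≤ pZ n σ μ y := by
    rw [← hL]; exact hle
  have hlog := Real.log_le_log (by positivity) hle'
  rw [Real.log_mul (Real.exp_pos _).ne' hpz.ne', Real.log_exp] at hlog
  have h2 := mul_le_mul_of_nonneg_left hlog (sq_nonneg σ)
  have h3 : σ ^ 2 * a = (‖z‖ ^ 2 - ‖y‖ ^ 2) / 2 + inner ℝ (y - z) m := by
    rw [ha]; field_simp
  rw [real_inner_comm]
  linarith

theorem stmt_8 {n : ℕ} (σ : ℝ) (hσ : 0 < σ)
    (μ : Measure (EuclideanSpace ℝ (Fin n))) [IsProbabilityMeasure μ]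
    (hmom : Integrable (fun x => x) μ)
    (φ : EuclideanSpace ℝ (Fin n) → EReal)
    (hproper : ∃ x, φ x ≠ ⊤) (hnbot : ∀ x, φ x ≠ ⊥)
    (hlsc : LowerSemicontinuous φ)
    (p : EuclideanSpace ℝ (Fin n) → EuclideanSpace ℝ (Fin n))
    (hp_cont : Continuous p)
    (hp_prox : ∀ x z,
      IsMinOn (fun w => φ w + ((‖w - x‖ ^ 2 / 2 : ℝ) : EReal)) Set.univ z ↔ z = p x)
    (hψ : ∀ z, mmse n σ μ z = p z) :
    (∀ x g h, HasGradientAt (fun w => -Real.log (pZ n σ μ w)) g x →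
        HasGradientAt (moreauEnv1 φ) h x → (σ ^ 2 : ℝ) • g = h) ∧
    ∃ C : ℝ, ∀ x, -Real.log (pZ n σ μ x) = (1 / σ ^ 2) * moreauEnv1 φ x + C := by
  have hF : ∀ x y, inner ℝ (p x) (y - x) ≤ (σ ^ 2 * Real.log (pZ n σ μ y) + ‖y‖ ^ 2 / 2)
        - (σ ^ 2 * Real.log (pZ n σ μ x) + ‖x‖ ^ 2 / 2) := fun x y => by
    rw [← hψ x]; exact gauss_subgrad σ hσ μ hmom x y
  have hc := const_of_subgrad _ _ p hp_cont hF (moreau_subgrad φ hproper hnbot p hp_prox)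
  obtain ⟨K, hK⟩ : ∃ K : ℝ, ∀ x, σ ^ 2 * Real.log (pZ n σ μ x) + moreauEnv1 φ x = K :=
    ⟨σ ^ 2 * Real.log (pZ n σ μ 0) + moreauEnv1 φ 0, fun x => by linarith [hc x]⟩
  have hfin : ∀ x, -Real.log (pZ n σ μ x) = (1 / σ ^ 2) * moreauEnv1 φ x + -K / σ ^ 2 := by
    intro x
    rw [← hK x]
    field_simp
    ring
  refine ⟨?_, _, hfin⟩
  intro x g h hg hh
  have hM : moreauEnv1 φ = fun w => σ ^ 2 * (-Real.log (pZ n σ μ w)) + K := by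
    funext w
    rw [← hK w]; ring
  have h1 := (hg.hasFDerivAt.const_mul (σ ^ 2)).add_const K
  rw [← hM] at h1
  have h2 := h1.unique hh.hasFDerivAt
  apply (InnerProductSpace.toDual ℝ (EuclideanSpace ℝ (Fin n))).injective
  rw [← h2]
  simp
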